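/- For every integer q ≥ 1, every deterministic OBDD (with an arbitrary variable order) that represents the partial function ⊕ord(EQ_q) has width at least 2^q. Here ⊕ord is applied to EQ_q viewed as a function of 2q variables, so ⊕ord(EQ_q) is a partial function of n = 2q(⌈log₂ 2q⌉+1) variables. -/

import Mathlib

set_option maxHeartbeats 1000000
set_option linter.unusedVariables false
/-- `binVal l a = Σ_{j=1}^l a_j 2^{l-j}` (a₁ is the most significant bit). -/
def binVal (l : ℕ) (a : Fin l → Bool) : ℕ :=
  ∑ j : Fin l, if a j then 2 ^ (l - 1 - (j : ℕ)) else 0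
/-- A deterministic OBDD of width `w` over `n` Boolean variables. -/
structure OBDD (n w : ℕ) where
  ord : Equiv.Perm (Fin n)
  tr : Fin n → Fin w → Bool → Fin w
  start : Fin w
  acc : Finset (Fin w)

namespace OBDD

def final {n w : ℕ} (M : OBDD n w) (x : Fin n → Bool) : Fin w :=
  (List.finRange n).foldl (fun s i => M.tr i s (x (M.ord i))) M.start

def Accepts {n w : ℕ} (M : OBDD n w) (x : Fin n → Bool) : Prop :=
  M.final x ∈ M.acc

def Represents {n w : ℕ} (M : OBDD n w) (f : (Fin n → Bool) → Bool) : Prop :=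
  ∀ x, M.Accepts x ↔ f x = true

def RepresentsPartial {n w : ℕ} (M : OBDD n w) (F : (Fin n → Bool) → Option Bool) : Prop :=
  ∀ x b, F x = some b → (M.Accepts x ↔ b = true)

/-- The OBDD obtained by reordering: order `π`, transitions `tr' i = tr (ord⁻¹ (π i))`. -/
def reorder {n w : ℕ} (M : OBDD n w) (π : Equiv.Perm (Fin n)) : OBDD n w :=
  ⟨π, fun i => M.tr (M.ord.symm (π i)), M.start, M.acc⟩

/-- Every reordering represents the same function as `M`. -/
def Commutative {n w : ℕ} (M : OBDD n w) : Prop :=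
  ∀ (π : Equiv.Perm (Fin n)) (x : Fin n → Bool),
    (M.reorder π).Accepts x ↔ M.Accepts x

end OBDD
lemma zIdx {q l : ℕ} (i : Fin q) (j : Fin l) : (i : ℕ) * l + (j : ℕ) < q * (l + 1) :=
  calc (i : ℕ) * l + (j : ℕ) < (i : ℕ) * l + l := Nat.add_lt_add_left j.isLt _
    _ = ((i : ℕ) + 1) * l := by ring
    _ ≤ q * l := Nat.mul_le_mul i.isLt (Nat.le_refl l)
    _ ≤ q * (l + 1) := Nat.mul_le_mul (Nat.le_refl q) (Nat.le_succ l)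

lemma yIdx {q l : ℕ} (i : Fin q) : q * l + (i : ℕ) < q * (l + 1) :=
  calc q * l + (i : ℕ) < q * l + q := Nat.add_lt_add_left i.isLt _
    _ = q * (l + 1) := by ring

/-- The bit `z_{i,j}` of an input to the reordered function
(layout: `z_{1,1},…,z_{q,l}, y_1,…,y_q`). -/
def zOf (q l : ℕ) (x : Fin (q * (l + 1)) → Bool) (i : Fin q) (j : Fin l) : Bool :=
  x ⟨(i : ℕ) * l + (j : ℕ), zIdx i j⟩

/-- The value bit `y_i` of an input to the reordered function. -/
def yOf (q l : ℕ) (x : Fin (q * (l + 1)) → Bool) (i : Fin q) : Bool :=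
  x ⟨q * l + (i : ℕ), yIdx i⟩

/-- `z_{1,j} ⊕ ⋯ ⊕ z_{i,j}`. -/
def xorZ (q l : ℕ) (x : Fin (q * (l + 1)) → Bool) (i : Fin q) (j : Fin l) : Bool :=
  decide ((Finset.univ.filter (fun i' : Fin q => i' ≤ i ∧ zOf q l x i' j = true)).card % 2 = 1)

/-- `θ(i) − 1` for the plain reordering. -/
def addrOrd (q l : ℕ) (x : Fin (q * (l + 1)) → Bool) (i : Fin q) : ℕ :=
  binVal l (zOf q l x i)

/-- `θ(i) − 1` for the xor-reordering. -/
def addrXor (q l : ℕ) (x : Fin (q * (l + 1)) → Bool) (i : Fin q) : ℕ :=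
  binVal l (xorZ q l x i)

/-- The partial reordered function: defined exactly when the addresses form a
permutation of `{1,…,q}`; then position `j` of `f`'s argument is `y_{θ⁻¹(j)}`. -/
noncomputable def ordPartial (q l : ℕ) (f : (Fin q → Bool) → Bool)
    (addr : (Fin (q * (l + 1)) → Bool) → Fin q → ℕ) :
    (Fin (q * (l + 1)) → Bool) → Option Bool := fun x =>
  if h : ∃ σ : Equiv.Perm (Fin q), ∀ i, addr x i = (σ i : ℕ) then
    some (f fun j => yOf q l x (h.choose.symm j))
  else none

/-- The partial function `ord(f)`. -/
noncomputable def ordF (q : ℕ) (f : (Fin q → Bool) → Bool) :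
    (Fin (q * (Nat.clog 2 q + 1)) → Bool) → Option Bool :=
  ordPartial q (Nat.clog 2 q) f (addrOrd q (Nat.clog 2 q))

/-- The partial function `⊕ord(f)`. -/
noncomputable def xorOrdF (q : ℕ) (f : (Fin q → Bool) → Bool) :
    (Fin (q * (Nat.clog 2 q + 1)) → Bool) → Option Bool :=
  ordPartial q (Nat.clog 2 q) f (addrXor q (Nat.clog 2 q))
/-- The equality function `EQ_q` on `2q` variables. -/
def EQF (q : ℕ) : (Fin (2 * q) → Bool) → Bool := fun x =>
  decide (∀ i : Fin q,
    x ⟨(i : ℕ), by have := i.isLt; omega⟩ = x ⟨q + (i : ℕ), by have := i.isLt; omega⟩)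

namespace OBDD

/-- Fooling-set bound: if `A u v` agrees with `A u v'` on the variables read before time `t` and
with `A u' v` on the remaining ones, and `A u v` is accepted exactly when `u = v`, then the width
is at least the number of possible `u`. -/
lemma card_le_width_of_accepts_iff_eq {n w : ℕ} (M : OBDD n w) {ι : Type*} [Fintype ι] (t : ℕ)
    (A : ι → ι → Fin n → Bool)
    (hfst : ∀ i : Fin n, (i : ℕ) < t → ∀ u v v', A u v (M.ord i) = A u v' (M.ord i))
    (hsnd : ∀ i : Fin n, t ≤ (i : ℕ) → ∀ u u' v, A u v (M.ord i) = A u' v (M.ord i))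
    (hacc : ∀ u v, M.Accepts (A u v) ↔ u = v) : Fintype.card ι ≤ w := by
  let mid : ι → Fin w := fun u =>
    ((List.finRange n).take t).foldl (fun s i => M.tr i s (A u u (M.ord i))) M.start
  suffices hinj : Function.Injective mid by
    simpa using Fintype.card_le_of_injective mid hinj
  have hmid : ∀ u v, M.final (A u v) = ((List.finRange n).drop t).foldl
      (fun s i => M.tr i s (A v v (M.ord i))) (mid u) := by
    intro u v
    unfold OBDD.final
    conv_lhs => rw [← List.take_append_drop t (List.finRange n), List.foldl_append]
    have h₁ : ((List.finRange n).take t).foldl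
        (fun s i => M.tr i s (A u v (M.ord i))) M.start = mid u := by
      refine List.foldl_ext _ _ _ fun s i hi => ?_
      obtain ⟨k, hk, rfl⟩ := List.mem_iff_getElem.1 hi
      have hk' : k < t := by
        simp only [List.length_take] at hk
        omega
      rw [hfst _ (by simpa using hk') u v u]
    rw [h₁]
    refine List.foldl_ext _ _ _ fun s i hi => ?_
    obtain ⟨k, hk, rfl⟩ := List.mem_iff_getElem.1 hi
    rw [hsnd _ (by simp) u v v]
  intro u u' huu'
  refine (hacc u u').1 ?_
  have hu' : M.Accepts (A u' u') := (hacc u' u').2 rfl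
  unfold OBDD.Accepts at hu' ⊢
  rwa [hmid, huu', ← hmid]

end OBDD

lemma exists_binVal_eq (l m : ℕ) (hm : m < 2 ^ l) : ∃ a : Fin l → Bool, binVal l a = m := by
  induction l generalizing m with
  | zero => exact ⟨fun _ => false, by simpa [binVal] using (Nat.lt_one_iff.1 hm).symm⟩
  | succ l ih =>
    have hcons : ∀ (b : Bool) (a : Fin l → Bool),
        binVal (l + 1) (Fin.cons b a) = (if b then 2 ^ l else 0) + binVal l a := by
      intro b a
      unfold binVal
      rw [Fin.sum_univ_succ]
      congr 1
      refine Finset.sum_congr rfl fun j _ => ?_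
      have : l + 1 - 1 - (j.succ : ℕ) = l - 1 - j := by
        rw [Fin.val_succ]
        omega
      rw [this, Fin.cons_succ]
    rw [pow_succ] at hm
    by_cases h : 2 ^ l ≤ m
    · obtain ⟨a, ha⟩ := ih (m - 2 ^ l) (by omega)
      exact ⟨Fin.cons true a, by simp [hcons, ha, h]⟩
    · obtain ⟨a, ha⟩ := ih m (by omega)
      exact ⟨Fin.cons false a, by simp [hcons, ha]⟩

/-- The bits whose prefix parities are `c 0, c 1, …`. -/
def prefixDiff (c : ℕ → Bool) : ℕ → Bool
  | 0 => c 0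
  | k + 1 => xor (c k) (c (k + 1))

lemma card_filter_prefixDiff_mod_two (c : ℕ → Bool) (k : ℕ) :
    ((Finset.range (k + 1)).filter (fun i => prefixDiff c i = true)).card % 2
      = (c k).toNat := by
  induction k with
  | zero => cases h : c 0 <;> simp [Finset.filter_singleton, prefixDiff, h]
  | succ k ih =>
    rw [Finset.range_add_one, Finset.filter_insert]
    have hnot : k + 1 ∉ (Finset.range (k + 1)).filter (fun i => prefixDiff c i = true) := by simp
    split_ifs with h
    · rw [Finset.card_insert_of_notMem hnot]
      rw [Nat.add_mod, ih]
      cases h₀ : c k <;> cases h₁ : c (k + 1) <;> simp_all [prefixDiff]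
    · rw [ih]
      cases h₀ : c k <;> cases h₁ : c (k + 1) <;> simp_all [prefixDiff]

lemma card_filter_fin_le (Q : ℕ) (i : Fin Q) (p : ℕ → Prop) [DecidablePred p] :
    (Finset.univ.filter (fun k : Fin Q => k ≤ i ∧ p k)).card
      = ((Finset.range (i + 1)).filter p).card := by
  rw [← Finset.card_map Fin.valEmbedding]
  congr 1
  ext k
  simp only [Finset.mem_map, Finset.mem_filter, Finset.mem_univ, true_and, Fin.valEmbedding_apply,
    Finset.mem_range]
  constructor
  · rintro ⟨j, ⟨hj, hp⟩, rfl⟩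
    exact ⟨Nat.lt_succ_of_le hj, hp⟩
  · rintro ⟨hk, hp⟩
    exact ⟨⟨k, by omega⟩, ⟨Fin.le_def.2 (Nat.le_of_lt_succ hk), hp⟩, rfl⟩

/-- The input with address bits `z` and value bits `y`. -/
def assemble (Q l : ℕ) (z : ℕ → ℕ → Bool) (y : Fin Q → Bool) (k : Fin (Q * (l + 1))) : Bool :=
  if h : (k : ℕ) < Q * l then z (k / l) (k % l)
  else y ⟨k - Q * l, by
    have := k.isLt.trans_eq (Nat.mul_succ Q l)
    omega⟩

lemma zOf_assemble (Q l : ℕ) (z : ℕ → ℕ → Bool) (y : Fin Q → Bool) (i : Fin Q) (j : Fin l) :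
    zOf Q l (assemble Q l z y) i j = z i j := by
  have hlt : (i : ℕ) * l + j < Q * l := calc
    (i : ℕ) * l + j < (i + 1) * l := by
      rw [Nat.succ_mul]
      exact Nat.add_lt_add_left j.isLt _
    _ ≤ Q * l := Nat.mul_le_mul_right _ i.isLt
  have hdiv : ((i : ℕ) * l + j) / l = i := by
    rw [mul_comm, Nat.mul_add_div j.pos, Nat.div_eq_of_lt j.isLt, add_zero]
  have hmod : ((i : ℕ) * l + j) % l = j := by
    rw [mul_comm, Nat.mul_add_mod, Nat.mod_eq_of_lt j.isLt]
  simp only [zOf, assemble, hlt, dif_pos, hdiv, hmod]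

lemma yOf_assemble (Q l : ℕ) (z : ℕ → ℕ → Bool) (y : Fin Q → Bool) (i : Fin Q) :
    yOf Q l (assemble Q l z y) i = y i := by
  simp [yOf, assemble]

lemma exists_addrXor_assemble (Q l : ℕ) (hl : Q ≤ 2 ^ l) (σ : Equiv.Perm (Fin Q)) :
    ∃ z : ℕ → ℕ → Bool, ∀ y i, addrXor Q l (assemble Q l z y) i = (σ i : ℕ) := by
  choose a ha using fun i : Fin Q => exists_binVal_eq l (σ i) ((σ i).isLt.trans_le hl)
  let c : ℕ → ℕ → Bool := fun j i => if h : i < Q ∧ j < l then a ⟨i, h.1⟩ ⟨j, h.2⟩ else false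
  refine ⟨fun i j => prefixDiff (c j) i, fun y i => ?_⟩
  rw [← ha, addrXor]
  congr 1
  ext1 j
  simp only [xorZ, zOf_assemble]
  rw [card_filter_fin_le Q i (fun k => prefixDiff (c j) k = true), card_filter_prefixDiff_mod_two]
  simp [c]

lemma ordPartial_eq_some {Q l : ℕ} {f : (Fin Q → Bool) → Bool}
    {addr : (Fin (Q * (l + 1)) → Bool) → Fin Q → ℕ} {x : Fin (Q * (l + 1)) → Bool}
    (σ : Equiv.Perm (Fin Q)) (hσ : ∀ i, addr x i = (σ i : ℕ)) :
    ordPartial Q l f addr x = some (f fun j => yOf Q l x (σ.symm j)) := by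
  have hex : ∃ σ : Equiv.Perm (Fin Q), ∀ i, addr x i = (σ i : ℕ) := ⟨σ, hσ⟩
  have huniq : hex.choose = σ := by
    ext i
    rw [← hex.choose_spec i, hσ i]
  rw [ordPartial, dif_pos hex, huniq]

/-- An injective ranking of `Fin Q` can be cut at a threshold so that exactly the `q` smallest
elements lie below it. -/
lemma exists_perm_lt_iff {Q q n : ℕ} (hq : q < Q) (r : Fin Q → Fin n)
    (hr : Function.Injective r) :
    ∃ (σ : Equiv.Perm (Fin Q)) (t : ℕ), ∀ i, (r i : ℕ) < t ↔ (σ i : ℕ) < q := by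
  have hmono : StrictMono (r ∘ Tuple.sort r) :=
    (Tuple.monotone_sort r).strictMono_of_injective (hr.comp (Tuple.sort r).injective)
  refine ⟨(Tuple.sort r).symm, r (Tuple.sort r ⟨q, hq⟩), fun i => ?_⟩
  have := hmono.lt_iff_lt (a := (Tuple.sort r).symm i) (b := ⟨q, hq⟩)
  rw [Function.comp_apply, Function.comp_apply, Equiv.apply_symm_apply] at this
  exact this

/-- every deterministic OBDD representing `⊕ord(EQ_q)` has width `≥ 2^q`. -/
theorem stmt7 (q : ℕ) (hq : 1 ≤ q) (w : ℕ)
    (M : OBDD (2 * q * (Nat.clog 2 (2 * q) + 1)) w)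
    (h : M.RepresentsPartial (xorOrdF (2 * q) (EQF q))) : 2 ^ q ≤ w := by
  have hl : 2 * q ≤ 2 ^ Nat.clog 2 (2 * q) := Nat.le_pow_clog one_lt_two _
  unfold xorOrdF at h
  generalize Nat.clog 2 (2 * q) = l at M h hl
  obtain ⟨σ, t, hσ⟩ := exists_perm_lt_iff (Q := 2 * q) (q := q) (by omega)
    (fun i => M.ord.symm ⟨2 * q * l + (i : ℕ), yIdx i⟩) (fun i j hij => by
      simpa [Fin.ext_iff] using hij)
  obtain ⟨z, hz⟩ := exists_addrXor_assemble (2 * q) l hl σ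
  let y : (Fin q → Bool) → (Fin q → Bool) → Fin (2 * q) → Bool := fun u v i =>
    if hi : (i : ℕ) < q then u ⟨i, hi⟩ else v ⟨i - q, by omega⟩
  let A : (Fin q → Bool) → (Fin q → Bool) → Fin (2 * q * (l + 1)) → Bool := fun u v =>
    assemble (2 * q) l z fun i => y u v (σ i)
  have hcut : ∀ (i : Fin (2 * q * (l + 1))) (hi : ¬ (M.ord i : ℕ) < 2 * q * l)
      (hlt : (M.ord i : ℕ) - 2 * q * l < 2 * q),
      (i : ℕ) < t ↔ (σ ⟨(M.ord i : ℕ) - 2 * q * l, hlt⟩ : ℕ) < q := by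
    intro i hi hlt
    rw [← hσ]
    have : (⟨2 * q * l + ((M.ord i : ℕ) - 2 * q * l), yIdx ⟨_, hlt⟩⟩ :
        Fin (2 * q * (l + 1))) = M.ord i := Fin.ext (by simp only; omega)
    simp only [this, Equiv.symm_apply_apply]
  have hcard := M.card_le_width_of_accepts_iff_eq t A ?_ ?_ ?_
  · simpa using hcard
  · intro i hi u v v'
    simp only [A, assemble]
    split_ifs with hk
    · rfl
    · simp only [y, dif_pos ((hcut i hk _).1 hi)]
  · intro i hi u u' v
    simp only [A, assemble]
    split_ifs with hk
    · rfl
    · simp only [y, dif_neg (fun hlt => absurd ((hcut i hk _).2 hlt) (not_lt.2 hi))]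
  · intro u v
    rw [h (A u v) _ (ordPartial_eq_some σ fun i => hz _ i)]
    simp only [A, yOf_assemble, Equiv.apply_symm_apply, EQF, decide_eq_true_eq, y]
    simp [funext_iff]
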